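/- Let s be a real number with s ≥ 2 and let t ∈ ℝ. Suppose that (u^{(j)})_{j≥1} and u are solutions of the defocusing NLS equation with initial data u^{(j)}(0) ∈ H^s and u(0) ∈ H^s respectively, and that u^{(j)}(0) converges weakly in H^s to u(0) as j → ∞. Then u^{(j)}(t) converges weakly in H^s to u(t) as j → ∞. -/

import Mathlib

/-!
Writing `z(t)` for the Fourier coefficients of a solution, the equation reads
`z' = -iωz - 2i N(z)` with `ω(n) = 4π²n²` and `N` the cubic convolution `NLterm`.

A weakly convergent sequence of data is bounded in `H^s` (`WeakConv.bounded`). Conservation of the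
energy `∫ |∂ₓu|² + ∫ |u|⁴` (`IsNLSSolution.energy_eq`) turns this into a bound for the `H¹` norm, and
hence for the `ℓ¹` norm of the Fourier coefficients, that is uniform in time and in the sequence
(`IsNLSSolution.tsum_norm_le`). Given the `ℓ¹` bound, Young's inequality
(`tsum_mul_triConv_le`) and Gronwall's inequality (`hnorm_sq_le_exp`) yield two facts:

* the `H^s` norms of `u⁽ʲ⁾(t)` are bounded in `j`, because the weight `⟨n⟩^s` distributes over the
  three factors of the nonlinearity (`IsNLSSolution.hnorm_sq_le`);
* the flow is Lipschitz in `L²` on bounded sets of `H^s` (`IsNLSSolution.hnorm_zero_sub_sq_le`).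

Weak convergence of the data in `H^s` implies strong convergence in `L²`
(`WeakConv.tendsto_hnorm_zero`), so `u⁽ʲ⁾(t) → u(t)` in `L²` and in particular Fourier coefficient by
Fourier coefficient. Together with boundedness in `H^s` this is weak convergence
(`weakConv_of_bounded`).

For `s = 2` the time derivative exists only in `L²`, which is just enough for energy conservation:
with increment `h = z(t) - z(t₀)` and `r = h - (t - t₀) z'(t₀)`, the linear part of the energy
increment is `2 Re (i ⟨r, z'⟩)`, of order `o(t - t₀)`, and the quadratic remainder is controlled by
`‖h‖_{L²} ‖h‖_{H²} = o(t - t₀)` (`energy_increment`). The real-variable Gronwall argument is likewise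
run on partial sums over modes, since the squared `H^s` norm need not be differentiable in time.
-/

open Filter Complex

noncomputable section

/-- The weight `⟨n⟩ = max(1, |n|)` as a real number. -/
def jap (n : ℤ) : ℝ := max 1 |(n : ℝ)|

/-- The `n`-th summand of the squared `H^s` norm of a sequence of Fourier coefficients. -/
def sobTerm (s : ℝ) (z : ℤ → ℂ) (n : ℤ) : ℝ := jap n ^ (2 * s) * ‖z n‖ ^ 2

/-- Membership in the Sobolev space `H^s` on the circle, where a distribution is
identified with its sequence of Fourier coefficients `(û(n))_{n ∈ ℤ}`. -/
def InH (s : ℝ) (z : ℤ → ℂ) : Prop := Summable (sobTerm s z)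

/-- The `H^s` norm `(∑ ⟨n⟩^{2s} |û(n)|²)^{1/2}`. -/
def hnorm (s : ℝ) (z : ℤ → ℂ) : ℝ := Real.sqrt (∑' n, sobTerm s z n)

/-- Continuity of a curve `t ↦ z(t)` with values in `H^s`. -/
def HCont (s : ℝ) (z : ℝ → ℤ → ℂ) : Prop :=
  ∀ t₀ : ℝ, Tendsto (fun t => hnorm s (fun n => z t n - z t₀ n)) (nhds t₀) (nhds 0)

/-- `z'` is the derivative at time `t₀` of the curve `t ↦ z(t)` in `H^s`. -/
def HDerivAt (s : ℝ) (z : ℝ → ℤ → ℂ) (z' : ℤ → ℂ) (t₀ : ℝ) : Prop :=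
  Tendsto (fun t => hnorm s (fun n => z t n - z t₀ n - (t - t₀) • z' n) / |t - t₀|)
    (nhdsWithin t₀ {t₀}ᶜ) (nhds 0)

/-- The `n`-th Fourier coefficient of `|u|² u`, where `z` is the sequence of Fourier
coefficients of `u`. -/
def NLterm (z : ℤ → ℂ) (n : ℤ) : ℂ :=
  ∑' p : ℤ × ℤ, z p.1 * z p.2 * (starRingEnd ℂ) (z (p.1 + p.2 - n))

/-- `∫₀¹ |u(x)|² dx` expressed via Parseval's identity through the Fourier
coefficients `z` of `u`. -/
def l2sq (z : ℤ → ℂ) : ℝ := ∑' n, ‖z n‖ ^ 2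

/-- `z : ℝ → (ℤ → ℂ)` (a curve of sequences of Fourier coefficients) is a solution of the
defocusing NLS equation `i ∂ₜ u = -∂ₓ² u + 2 |u|² u` on the circle with initial data `z₀ ∈ H^σ`:
it is continuous as a curve in `H^σ`, continuously differentiable as a curve in `H^{σ-2}`,
and satisfies `∂ₜ u = i ∂ₓ² u - 2 i |u|² u` in `H^{σ-2}` for all times, where on the Fourier
side `∂ₓ²` is multiplication by `-4π²n²`. -/
def IsNLSSolution (σ : ℝ) (z : ℝ → ℤ → ℂ) (z₀ : ℤ → ℂ) : Prop :=
  z 0 = z₀ ∧ (∀ t, InH σ (z t)) ∧ HCont σ z ∧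
  ∃ z' : ℝ → ℤ → ℂ,
    (∀ t, InH (σ - 2) (z' t)) ∧ (∀ t, HDerivAt (σ - 2) z (z' t) t) ∧ HCont (σ - 2) z' ∧
    ∀ t n, z' t n =
      Complex.I * (-(4 * (Real.pi : ℂ) ^ 2 * (n : ℂ) ^ 2)) * z t n
        - 2 * Complex.I * NLterm (z t) n

/-- The nearly linear flow `v(t) = ∑ₙ û₀(n) e^{-i ωₙ t} e^{2πinx}`, on the Fourier side. -/
def vflow (z₀ : ℤ → ℂ) (ω : ℤ → ℝ) (t : ℝ) (n : ℤ) : ℂ :=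
  Complex.exp (-Complex.I * (ω n : ℂ) * (t : ℂ)) * z₀ n

/-- The modified linear Schrödinger flow
`w(t) = e^{-ict} ∑ₙ û₀(n) e^{-i 4π²n² t} e^{2πinx}` with `c = 4 ∫₀¹ |u₀|² dx`,
on the Fourier side. -/
def wflow (z₀ : ℤ → ℂ) (t : ℝ) (n : ℤ) : ℂ :=
  Complex.exp (-Complex.I * (4 * (l2sq z₀ : ℂ)) * (t : ℂ)) *
    Complex.exp (-Complex.I * (4 * (Real.pi : ℂ) ^ 2 * (n : ℂ) ^ 2) * (t : ℂ)) * z₀ n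

/-- Weak convergence in the Sobolev sequence space `𝔥^s`: testing against every `y ∈ 𝔥^s`
with the `𝔥^s` inner product. -/
def WeakConv (s : ℝ) (z : ℕ → ℤ → ℂ) (zl : ℤ → ℂ) : Prop :=
  ∀ y : ℤ → ℂ, InH s y →
    Tendsto (fun j => ∑' n : ℤ, ((jap n ^ (2 * s) : ℝ) : ℂ) * ((starRingEnd ℂ) (y n) * z j n))
      atTop (nhds (∑' n : ℤ, ((jap n ^ (2 * s) : ℝ) : ℂ) * ((starRingEnd ℂ) (y n) * zl n)))

open Topology Set MeasureTheory

/-! ### Sobolev sequences as elements of `ℓ²` -/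

lemma one_le_jap (n : ℤ) : 1 ≤ jap n := le_max_left _ _

lemma jap_pos (n : ℤ) : 0 < jap n := one_pos.trans_le (one_le_jap n)

lemma jap_rpow_two_mul (s : ℝ) (n : ℤ) : jap n ^ (2 * s) = (jap n ^ s) ^ 2 := by
  rw [mul_comm, Real.rpow_mul (jap_pos n).le]
  norm_cast

lemma sobTerm_eq (s : ℝ) (z : ℤ → ℂ) (n : ℤ) :
    sobTerm s z n = ‖((jap n ^ s : ℝ) : ℂ) * z n‖ ^ 2 := by
  rw [sobTerm, norm_mul, mul_pow, jap_rpow_two_mul, Complex.norm_real, Real.norm_eq_abs, sq_abs]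

lemma sobTerm_nonneg (s : ℝ) (z : ℤ → ℂ) (n : ℤ) : 0 ≤ sobTerm s z n := by
  rw [sobTerm_eq]; positivity

lemma sobTerm_zero (z : ℤ → ℂ) (n : ℤ) : sobTerm 0 z n = ‖z n‖ ^ 2 := by
  simp [sobTerm]

lemma sobTerm_mono {s s' : ℝ} (h : s' ≤ s) (z : ℤ → ℂ) (n : ℤ) :
    sobTerm s' z n ≤ sobTerm s z n := by
  unfold sobTerm
  gcongr
  exact one_le_jap n

lemma InH.mono {s s' : ℝ} (h : s' ≤ s) {z : ℤ → ℂ} (hz : InH s z) : InH s' z :=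
  Summable.of_nonneg_of_le (sobTerm_nonneg s' z) (sobTerm_mono h z) hz

/-- The isometric embedding `z ↦ (⟨n⟩^s z(n))ₙ` of `H^s` into `ℓ²(ℤ)`. -/
def emb (s : ℝ) (z : ℤ → ℂ) (hz : InH s z) : lp (fun _ : ℤ => ℂ) 2 :=
  ⟨fun n => ((jap n ^ s : ℝ) : ℂ) * z n, by
    refine memℓp_gen ?_
    refine hz.congr fun n => ?_
    rw [sobTerm_eq]
    norm_num⟩

lemma emb_apply {s : ℝ} {z : ℤ → ℂ} (hz : InH s z) (n : ℤ) :
    (emb s z hz) n = ((jap n ^ s : ℝ) : ℂ) * z n := rfl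

lemma norm_emb_sq {s : ℝ} {z : ℤ → ℂ} (hz : InH s z) :
    ‖emb s z hz‖ ^ 2 = ∑' n, sobTerm s z n := by
  have := lp.norm_rpow_eq_tsum (p := 2) (by simp) (emb s z hz)
  simpa only [ENNReal.toReal_ofNat, Real.rpow_ofNat, emb_apply, ← sobTerm_eq] using this

lemma norm_emb {s : ℝ} {z : ℤ → ℂ} (hz : InH s z) : ‖emb s z hz‖ = hnorm s z := by
  rw [hnorm, ← norm_emb_sq hz, Real.sqrt_sq (norm_nonneg _)]

lemma hnorm_sq (s : ℝ) (z : ℤ → ℂ) : hnorm s z ^ 2 = ∑' n, sobTerm s z n :=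
  Real.sq_sqrt (tsum_nonneg (sobTerm_nonneg s z))

lemma hnorm_nonneg (s : ℝ) (z : ℤ → ℂ) : 0 ≤ hnorm s z := Real.sqrt_nonneg _

lemma InH.sub {s : ℝ} {z w : ℤ → ℂ} (hz : InH s z) (hw : InH s w) :
    InH s (fun n => z n - w n) := by
  have h := (lp.memℓp (emb s z hz - emb s w hw)).summable (by simp)
  refine h.congr fun n => ?_
  simp only [sobTerm_eq, lp.coeFn_sub, Pi.sub_apply, emb_apply, ← mul_sub]
  simp

lemma InH.smul {s : ℝ} {z : ℤ → ℂ} (hz : InH s z) (c : ℝ) : InH s (fun n => c • z n) := by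
  refine (Summable.mul_left (c ^ 2) hz).congr fun n => ?_
  simp only [sobTerm, norm_smul, Real.norm_eq_abs, mul_pow, sq_abs]
  ring

lemma emb_sub {s : ℝ} {z w : ℤ → ℂ} (hz : InH s z) (hw : InH s w) :
    emb s _ (hz.sub hw) = emb s z hz - emb s w hw := by
  ext n
  simp [emb_apply, mul_sub]

lemma hnorm_mono {s s' : ℝ} (h : s' ≤ s) {z : ℤ → ℂ} (hz : InH s z) :
    hnorm s' z ≤ hnorm s z :=
  Real.sqrt_le_sqrt ((hz.mono h).tsum_le_tsum (sobTerm_mono h z) hz)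

lemma norm_le_hnorm {s : ℝ} (hs : 0 ≤ s) {z : ℤ → ℂ} (hz : InH s z) (n : ℤ) :
    ‖z n‖ ≤ hnorm s z := by
  refine le_trans ?_ (hnorm_mono hs hz)
  refine Real.le_sqrt_of_sq_le ?_
  rw [← sobTerm_zero]
  exact (hz.mono hs).le_tsum n fun m _ => sobTerm_nonneg 0 z m

/-- A curve that is continuous in `H^s` is continuous as a curve in `ℓ²(ℤ)`. -/
lemma HCont.continuous_emb {s : ℝ} {z : ℝ → ℤ → ℂ} (hc : HCont s z) (hz : ∀ t, InH s (z t)) :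
    Continuous fun t => emb s (z t) (hz t) := by
  rw [continuous_iff_continuousAt]
  intro t₀
  rw [ContinuousAt, tendsto_iff_norm_sub_tendsto_zero]
  refine (hc t₀).congr fun t => ?_
  rw [← emb_sub, norm_emb]

lemma HCont.mono {s s' : ℝ} (h : s' ≤ s) {z : ℝ → ℤ → ℂ} (hc : HCont s z)
    (hz : ∀ t, InH s (z t)) : HCont s' z := fun t₀ =>
  squeeze_zero (fun _ => hnorm_nonneg _ _) (fun t => hnorm_mono h ((hz t).sub (hz t₀))) (hc t₀)

lemma HDerivAt.mono {s s' : ℝ} (h : s' ≤ s) {z : ℝ → ℤ → ℂ} {z' : ℤ → ℂ} {t₀ : ℝ}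
    (hd : HDerivAt s z z' t₀) (hz : ∀ t, InH s (z t)) (hz' : InH s z') :
    HDerivAt s' z z' t₀ := by
  refine squeeze_zero (fun t => div_nonneg (hnorm_nonneg _ _) (abs_nonneg _)) (fun t => ?_) hd
  gcongr
  exact hnorm_mono h (((hz t).sub (hz t₀)).sub (hz'.smul _))

lemma HDerivAt.hasDerivAt {s : ℝ} (hs : 0 ≤ s) {z : ℝ → ℤ → ℂ} {z' : ℤ → ℂ} {t₀ : ℝ}
    (hd : HDerivAt s z z' t₀) (hz : ∀ t, InH s (z t)) (hz' : InH s z') (n : ℤ) :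
    HasDerivAt (fun t => z t n) (z' n) t₀ := by
  rw [hasDerivAt_iff_isLittleO, Asymptotics.isLittleO_iff]
  intro c hc
  have h := eventually_nhdsWithin_iff.1 ((tendsto_order.1 hd).2 c hc)
  filter_upwards [h] with t ht
  rcases eq_or_ne t t₀ with rfl | hne
  · simp
  have h1 := (div_lt_iff₀ (abs_pos.2 (sub_ne_zero.2 hne))).1 (ht hne)
  exact (norm_le_hnorm hs (((hz t).sub (hz t₀)).sub (hz'.smul (t - t₀))) n).trans h1.le

/-! ### Weak convergence -/

lemma inner_emb {s : ℝ} {y z : ℤ → ℂ} (hy : InH s y) (hz : InH s z) :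
    inner ℂ (emb s y hy) (emb s z hz)
      = ∑' n : ℤ, ((jap n ^ (2 * s) : ℝ) : ℂ) * ((starRingEnd ℂ) (y n) * z n) := by
  rw [lp.inner_eq_tsum]
  refine tsum_congr fun n => ?_
  simp only [emb_apply, jap_rpow_two_mul, RCLike.inner_apply, map_mul, Complex.conj_ofReal]
  push_cast
  ring

lemma exists_emb_eq (s : ℝ) (x : lp (fun _ : ℤ => ℂ) 2) :
    ∃ y, ∃ hy : InH s y, emb s y hy = x := by
  have h0 : ∀ n : ℤ, ((jap n ^ s : ℝ) : ℂ) ≠ 0 := fun n =>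
    Complex.ofReal_ne_zero.2 (Real.rpow_pos_of_pos (jap_pos n) s).ne'
  have hx := (lp.memℓp x).summable (by simp)
  refine ⟨fun n => ((jap n ^ s : ℝ) : ℂ)⁻¹ * x n, ?_, ?_⟩
  · refine hx.congr fun n => ?_
    rw [sobTerm_eq, mul_inv_cancel_left₀ (h0 n)]
    simp
  · ext n
    exact mul_inv_cancel_left₀ (h0 n) (x n)

lemma weakConv_iff {s : ℝ} {z : ℕ → ℤ → ℂ} {zl : ℤ → ℂ} (hz : ∀ j, InH s (z j))
    (hzl : InH s zl) :
    WeakConv s z zl ↔ ∀ x : lp (fun _ : ℤ => ℂ) 2,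
      Tendsto (fun j => inner ℂ x (emb s (z j) (hz j))) atTop (𝓝 (inner ℂ x (emb s zl hzl))) := by
  constructor
  · intro h x
    obtain ⟨y, hy, rfl⟩ := exists_emb_eq s x
    simpa only [inner_emb] using h y hy
  · intro h y hy
    simpa only [inner_emb] using h (emb s y hy)

/-- Uniform boundedness principle: weakly convergent sequences are bounded. -/
lemma WeakConv.bounded {s : ℝ} {z : ℕ → ℤ → ℂ} {zl : ℤ → ℂ} (hw : WeakConv s z zl)
    (hz : ∀ j, InH s (z j)) (hzl : InH s zl) : ∃ C, ∀ j, hnorm s (z j) ≤ C := by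
  rw [weakConv_iff hz hzl] at hw
  obtain ⟨C, hC⟩ := banach_steinhaus (g := fun j => innerSL ℂ (emb s (z j) (hz j))) fun x => by
    obtain ⟨C, hC⟩ := (hw x).norm.bddAbove_range
    refine ⟨C, fun j => ?_⟩
    rw [innerSL_apply_apply, norm_inner_symm]
    exact hC ⟨j, rfl⟩
  refine ⟨C, fun j => ?_⟩
  rw [← norm_emb (hz j), ← innerSL_apply_norm (𝕜 := ℂ)]
  exact hC j

lemma WeakConv.coeff {s : ℝ} {z : ℕ → ℤ → ℂ} {zl : ℤ → ℂ} (hw : WeakConv s z zl)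
    (hz : ∀ j, InH s (z j)) (hzl : InH s zl) (n : ℤ) :
    Tendsto (fun j => z j n) atTop (𝓝 (zl n)) := by
  rw [weakConv_iff hz hzl] at hw
  have h0 : ((jap n ^ s : ℝ) : ℂ) ≠ 0 :=
    Complex.ofReal_ne_zero.2 (Real.rpow_pos_of_pos (jap_pos n) s).ne'
  have h := (hw (lp.single 2 n 1)).const_mul (((jap n ^ s : ℝ) : ℂ)⁻¹)
  simpa [lp.inner_single_left, emb_apply, h0] using h

/-- A bounded sequence in `H^s` whose Fourier coefficients converge is weakly convergent. -/
lemma weakConv_of_bounded {s : ℝ} {z : ℕ → ℤ → ℂ} {zl : ℤ → ℂ}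
    (hz : ∀ j, InH s (z j)) (hzl : InH s zl) {C : ℝ} (hC : ∀ j, hnorm s (z j) ≤ C)
    (hc : ∀ n, Tendsto (fun j => z j n) atTop (𝓝 (zl n))) : WeakConv s z zl := by
  rw [weakConv_iff hz hzl]
  intro x
  set Z := fun j => emb s (z j) (hz j) with hZ
  set L := emb s zl hzl with hL
  have hfin : ∀ F : Finset ℤ, Tendsto
      (fun j => inner ℂ (∑ n ∈ F, lp.single 2 n (x n)) (Z j)) atTop
      (𝓝 (inner ℂ (∑ n ∈ F, lp.single 2 n (x n)) L)) := by
    intro F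
    simp only [sum_inner, lp.inner_single_left]
    refine tendsto_finsetSum _ fun n _ => ?_
    exact Tendsto.inner tendsto_const_nhds ((hc n).const_mul _)
  have hsum := lp.hasSum_single (p := 2) (by simp) x
  have hC0 : 0 ≤ C := (hnorm_nonneg s (z 0)).trans (hC 0)
  rw [Metric.tendsto_nhds]
  intro ε hε
  set B := C + ‖L‖ + 1 with hB
  have hB0 : 0 < B := by positivity
  obtain ⟨F, hF⟩ := (Metric.tendsto_nhds.1 hsum (ε / (2 * B)) (by positivity)).exists
  filter_upwards [Metric.tendsto_nhds.1 (hfin F) (ε / 2) (by positivity)] with j hj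
  rw [dist_eq_norm, ← inner_sub_right] at hj ⊢
  rw [dist_eq_norm, norm_sub_rev] at hF
  set P := ∑ n ∈ F, lp.single 2 n (x n) with hP
  have h1 : inner ℂ x (Z j - L) = inner ℂ (x - P) (Z j - L) + inner ℂ P (Z j - L) := by
    rw [inner_sub_left]; ring
  have h2 : ‖Z j - L‖ ≤ B := by
    refine (norm_sub_le _ _).trans ?_
    have : ‖Z j‖ ≤ C := by rw [hZ, norm_emb]; exact hC j
    linarith
  have h3 : ‖inner ℂ (x - P) (Z j - L)‖ ≤ ε / (2 * B) * B :=
    (norm_inner_le_norm _ _).trans (by gcongr)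
  have h4 : ε / (2 * B) * B = ε / 2 := by field_simp
  rw [h1]
  refine (norm_add_le _ _).trans_lt ?_
  linarith

/-! ### A Gronwall inequality for sums of nonnegative modes -/

/-- Gronwall's inequality for `∑ₙ aₙ(t)` when only the individual `aₙ` are known to be
differentiable: the partial sums satisfy the integrated inequality, which passes to the limit. -/
lemma gronwall_tsum_of_nonneg {a a' : ℝ → ℤ → ℝ} {K : ℝ}
    (ha : ∀ t n, HasDerivAt (fun t => a t n) (a' t n) t) (hs : ∀ t, Summable (a t))
    (hc : Continuous fun t => ∑' n, a t n)
    (hb : ∀ t, ∀ F : Finset ℤ, ∑ n ∈ F, |a' t n| ≤ K * ∑' n, a t n) {t : ℝ} (ht : 0 ≤ t) :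
    ∑' n, a t n ≤ (∑' n, a 0 n) * Real.exp (K * t) := by
  set f : ℝ → ℝ := fun t => ∑' n, a t n with hf
  have hmv : ∀ x y m : ℝ, x ≤ y → (∀ τ ∈ Icc x y, K * f τ ≤ m) → f y - f x ≤ m * (y - x) := by
    intro x y m hxy hm
    have hlim : Tendsto (fun F : Finset ℤ => ∑ n ∈ F, a y n - ∑ n ∈ F, a x n) atTop
        (𝓝 (f y - f x)) := Tendsto.sub (hs y).hasSum (hs x).hasSum
    refine le_of_tendsto hlim (Eventually.of_forall fun F => ?_)
    have hd : ∀ τ, HasDerivAt (fun t => ∑ n ∈ F, a t n) (∑ n ∈ F, a' τ n) τ := fun τ =>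
      HasDerivAt.fun_sum fun n _ => ha τ n
    refine (convex_Icc x y).image_sub_le_mul_sub_of_deriv_le
      (f := fun t => ∑ n ∈ F, a t n) (fun τ _ => (hd τ).continuousAt.continuousWithinAt)
      (fun τ _ => (hd τ).differentiableAt.differentiableWithinAt) (fun τ hτ => ?_)
      x (left_mem_Icc.2 hxy) y (right_mem_Icc.2 hxy) hxy
    rw [(hd τ).deriv]
    calc ∑ n ∈ F, a' τ n ≤ ∑ n ∈ F, |a' τ n| := Finset.sum_le_sum fun n _ => le_abs_self _
      _ ≤ K * f τ := hb τ F
      _ ≤ m := hm τ (interior_subset hτ)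
  have hg := le_gronwallBound_of_liminf_deriv_right_le (f := f) (f' := fun x => K * f x)
    (δ := f 0) (K := K) (ε := 0) (a := 0) (b := t) hc.continuousOn ?_ le_rfl
    (fun x _ => by simp) t (right_mem_Icc.2 ht)
  · simpa [gronwallBound_ε0] using hg
  · intro x _ r hr
    obtain ⟨m, hm1, hm2⟩ := exists_between hr
    have hev : ∀ᶠ τ in 𝓝 x, K * f τ < m :=
      (continuous_const.mul hc).continuousAt.eventually (gt_mem_nhds hm1)
    obtain ⟨ε, hε, hball⟩ := Metric.eventually_nhds_iff.1 hev
    refine Eventually.frequently ?_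
    filter_upwards [Ioo_mem_nhdsGT (show x < x + ε by linarith)] with y hy
    have hxy : 0 < y - x := sub_pos.2 hy.1
    have := hmv x y m hy.1.le fun τ hτ => (hball (by
      rw [Real.dist_eq, abs_of_nonneg (by linarith [hτ.1])]
      linarith [hτ.2, hy.2])).le
    rw [inv_mul_lt_iff₀ hxy]
    nlinarith

lemma gronwall_tsum {a a' : ℝ → ℤ → ℝ} {K : ℝ}
    (ha : ∀ t n, HasDerivAt (fun t => a t n) (a' t n) t) (hs : ∀ t, Summable (a t))
    (hc : Continuous fun t => ∑' n, a t n)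
    (hb : ∀ t, ∀ F : Finset ℤ, ∑ n ∈ F, |a' t n| ≤ K * ∑' n, a t n) (t : ℝ) :
    ∑' n, a t n ≤ (∑' n, a 0 n) * Real.exp (K * |t|) := by
  rcases le_total 0 t with ht | ht
  · rw [abs_of_nonneg ht]
    exact gronwall_tsum_of_nonneg ha hs hc hb ht
  · rw [abs_of_nonpos ht]
    have h := gronwall_tsum_of_nonneg (a := fun t => a (-t)) (a' := fun t n => -a' (-t) n)
      (fun t n => by
        have := HasDerivAt.scomp (h := fun t : ℝ => -t) t (ha (-t) n) (hasDerivAt_neg t)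
        simpa [Function.comp_def] using this)
      (fun t => hs (-t)) (hc.comp continuous_neg) (fun t F => by simpa using hb (-t) F)
      (neg_nonneg.2 ht)
    simpa using h

/-! ### Trilinear convolution estimates -/

open scoped ENNReal

/-- The sum over the three positions of the factor `c` in the convolution `a * a * ā`,
at output frequency `n`. -/
def triConv (c a : ℤ → ℝ≥0∞) (n : ℤ) : ℝ≥0∞ :=
  ∑' p : ℤ × ℤ, (c p.1 * a p.2 * a (p.1 + p.2 - n) + a p.1 * c p.2 * a (p.1 + p.2 - n)
    + a p.1 * a p.2 * c (p.1 + p.2 - n))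

lemma ennreal_mul_le_sq_add_sq (x y : ℝ≥0∞) : x * y ≤ x ^ 2 + y ^ 2 := by
  rcases le_total x y with h | h
  · calc x * y ≤ y * y := by gcongr
      _ ≤ x ^ 2 + y ^ 2 := by rw [← sq]; exact le_add_self
  · calc x * y ≤ x * x := by gcongr
      _ ≤ x ^ 2 + y ^ 2 := by rw [← sq]; exact le_self_add

lemma tsum_mul_equiv_le (c : ℤ → ℝ≥0∞) (e : ℤ ≃ ℤ) :
    ∑' n, c n * c (e n) ≤ 2 * ∑' n, c n ^ 2 := by
  calc ∑' n, c n * c (e n) ≤ ∑' n, (c n ^ 2 + c (e n) ^ 2) :=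
        ENNReal.tsum_le_tsum fun n => ennreal_mul_le_sq_add_sq _ _
    _ = 2 * ∑' n, c n ^ 2 := by
        rw [ENNReal.tsum_add, e.tsum_eq fun n => c n ^ 2, two_mul]

lemma tsum_conv_third (c a : ℤ → ℝ≥0∞) :
    ∑' n, c n * ∑' p : ℤ × ℤ, a p.1 * a p.2 * c (p.1 + p.2 - n)
      ≤ 2 * (∑' n, a n) ^ 2 * ∑' n, c n ^ 2 := by
  calc ∑' n, c n * ∑' p : ℤ × ℤ, a p.1 * a p.2 * c (p.1 + p.2 - n)
      = ∑' p : ℤ × ℤ, a p.1 * a p.2 * ∑' n, c n * c (p.1 + p.2 - n) := by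
        simp_rw [← ENNReal.tsum_mul_left]
        rw [ENNReal.tsum_comm]
        refine tsum_congr fun p => tsum_congr fun n => ?_
        ring
    _ ≤ ∑' p : ℤ × ℤ, a p.1 * a p.2 * (2 * ∑' n, c n ^ 2) :=
        ENNReal.tsum_le_tsum fun p =>
          mul_le_mul_right (tsum_mul_equiv_le c (Equiv.subLeft (p.1 + p.2))) _
    _ = 2 * (∑' n, a n) ^ 2 * ∑' n, c n ^ 2 := by
        rw [ENNReal.tsum_mul_right, ENNReal.tsum_prod']
        simp_rw [ENNReal.tsum_mul_left]
        rw [ENNReal.tsum_mul_right]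
        ring

lemma tsum_conv_first (c a : ℤ → ℝ≥0∞) :
    ∑' n, c n * ∑' p : ℤ × ℤ, c p.1 * a p.2 * a (p.1 + p.2 - n)
      ≤ 2 * (∑' n, a n) ^ 2 * ∑' n, c n ^ 2 := by
  calc ∑' n, c n * ∑' p : ℤ × ℤ, c p.1 * a p.2 * a (p.1 + p.2 - n)
      = ∑' n, ∑' q, ∑' r, a q * a r * (c n * c (n + (r - q))) := by
        refine tsum_congr fun n => ?_
        rw [ENNReal.tsum_prod', ENNReal.tsum_comm, ← ENNReal.tsum_mul_left]
        refine tsum_congr fun q => ?_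
        -- at fixed `n` and `q`, sum over `r = p + q - n` instead of `p`
        rw [← (Equiv.addRight (n - q)).tsum_eq, ← ENNReal.tsum_mul_left]
        refine tsum_congr fun r => ?_
        simp only [Equiv.coe_addRight]
        rw [show r + (n - q) + q - n = r by ring, show r + (n - q) = n + (r - q) by ring]
        ring
    _ = ∑' q, ∑' r, a q * a r * ∑' n, c n * c (n + (r - q)) := by
        rw [ENNReal.tsum_comm]
        refine tsum_congr fun q => ?_
        rw [ENNReal.tsum_comm]
        simp_rw [← ENNReal.tsum_mul_left]
    _ ≤ ∑' q, ∑' r, a q * a r * (2 * ∑' n, c n ^ 2) :=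
        ENNReal.tsum_le_tsum fun q => ENNReal.tsum_le_tsum fun r =>
          mul_le_mul_right (tsum_mul_equiv_le c (Equiv.addRight (r - q))) _
    _ = 2 * (∑' n, a n) ^ 2 * ∑' n, c n ^ 2 := by
        simp_rw [ENNReal.tsum_mul_right, ENNReal.tsum_mul_left]
        rw [ENNReal.tsum_mul_right]
        ring

/-- Young's inequality `ℓ¹ * ℓ¹ * ℓ² → ℓ²`, paired with an element of `ℓ²`. -/
lemma tsum_mul_triConv_le (c a : ℤ → ℝ≥0∞) :
    ∑' n, c n * triConv c a n ≤ 6 * (∑' n, a n) ^ 2 * ∑' n, c n ^ 2 := by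
  have h1 := tsum_conv_first c a
  have h3 := tsum_conv_third c a
  have h2 : ∑' n, c n * ∑' p : ℤ × ℤ, a p.1 * c p.2 * a (p.1 + p.2 - n)
      ≤ 2 * (∑' n, a n) ^ 2 * ∑' n, c n ^ 2 := by
    refine le_trans (le_of_eq (tsum_congr fun n => ?_)) h1
    rw [← (Equiv.prodComm ℤ ℤ).tsum_eq]
    congr 1
    refine tsum_congr fun p => ?_
    simp only [Equiv.prodComm_apply, Prod.fst_swap, Prod.snd_swap]
    rw [add_comm p.2 p.1, mul_comm (a p.2)]
  simp only [triConv, ENNReal.tsum_add, mul_add]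
  refine (add_le_add (add_le_add h1 h2) h3).trans (le_of_eq ?_)
  ring

/-! ### Growth of Sobolev norms -/

lemma tsum_enorm_sq {s : ℝ} {z : ℤ → ℂ} (hz : InH s z) :
    ∑' n, ‖((jap n ^ s : ℝ) : ℂ) * z n‖ₑ ^ 2 = ENNReal.ofReal (hnorm s z ^ 2) := by
  rw [hnorm_sq, ENNReal.ofReal_tsum_of_nonneg (sobTerm_nonneg s z) hz]
  refine tsum_congr fun n => ?_
  rw [sobTerm_eq, ENNReal.ofReal_pow (norm_nonneg _), ofReal_norm]

/-- A curve `ζ' = -iωζ + G` whose nonlinear part `G` is dominated by cubic convolutions with two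
factors in `ℓ¹` and one factor `ζ` has `H^s` norm growing at most exponentially. -/
lemma hnorm_sq_le_exp {s : ℝ} {ζ G : ℝ → ℤ → ℂ} {ω : ℤ → ℝ} {A M : ℝ} (hA : 0 ≤ A) (hM : 0 ≤ M)
    {α : ℝ → ℤ → ℝ≥0∞} (hζ : ∀ t, InH s (ζ t)) (hcont : HCont s ζ)
    (hd : ∀ t n, HasDerivAt (fun t => ζ t n) (-(Complex.I * ω n * ζ t n) + G t n) t)
    (hα : ∀ t, ∑' n, α t n ≤ ENNReal.ofReal M)
    (hG : ∀ t n, ENNReal.ofReal (jap n ^ s) * ‖G t n‖ₑ ≤ ENNReal.ofReal A *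
      triConv (fun m => ‖((jap m ^ s : ℝ) : ℂ) * ζ t m‖ₑ) (α t) n) (t : ℝ) :
    hnorm s (ζ t) ^ 2 ≤ hnorm s (ζ 0) ^ 2 * Real.exp (12 * A * M ^ 2 * |t|) := by
  have hda : ∀ t n, HasDerivAt (fun t => sobTerm s (ζ t) n)
      (jap n ^ (2 * s) * (2 * ((starRingEnd ℂ) (ζ t n) * G t n).re)) t := by
    intro t n
    refine HasDerivAt.const_mul _ ((hd t n).norm_sq.congr_deriv ?_)
    rw [Complex.inner]
    simp
    ring
  simp only [hnorm_sq]
  refine gronwall_tsum hda hζ ?_ (fun t F => ?_) t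
  · simp_rw [fun t => (norm_emb_sq (hζ t)).symm]
    exact (hcont.continuous_emb hζ).norm.pow 2
  · rw [← ENNReal.ofReal_le_ofReal_iff
      (mul_nonneg (by positivity) (tsum_nonneg (sobTerm_nonneg s _))), ← hnorm_sq,
      ENNReal.ofReal_sum_of_nonneg fun n _ => abs_nonneg _]
    calc ∑ n ∈ F, ENNReal.ofReal
            |jap n ^ (2 * s) * (2 * ((starRingEnd ℂ) (ζ t n) * G t n).re)|
        ≤ ∑ n ∈ F, 2 * (‖((jap n ^ s : ℝ) : ℂ) * ζ t n‖ₑ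
            * (ENNReal.ofReal (jap n ^ s) * ‖G t n‖ₑ)) := by
          refine Finset.sum_le_sum fun n _ => ?_
          have hj : 0 < jap n ^ s := Real.rpow_pos_of_pos (jap_pos n) s
          have h1 : |jap n ^ (2 * s) * (2 * ((starRingEnd ℂ) (ζ t n) * G t n).re)|
              ≤ 2 * (‖((jap n ^ s : ℝ) : ℂ) * ζ t n‖ * (jap n ^ s * ‖G t n‖)) := by
            rw [jap_rpow_two_mul, abs_mul, abs_mul, norm_mul, Complex.norm_real,
              Real.norm_of_nonneg hj.le, abs_of_nonneg (sq_nonneg (jap n ^ s)), abs_two]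
            have h2 := Complex.abs_re_le_norm ((starRingEnd ℂ) (ζ t n) * G t n)
            rw [norm_mul, RCLike.norm_conj] at h2
            calc _ ≤ (jap n ^ s) ^ 2 * (2 * (‖ζ t n‖ * ‖G t n‖)) := by gcongr
              _ = _ := by ring
          refine (ENNReal.ofReal_le_ofReal h1).trans (le_of_eq ?_)
          rw [ENNReal.ofReal_mul (by norm_num), ENNReal.ofReal_mul (norm_nonneg _),
            ENNReal.ofReal_mul hj.le, ofReal_norm, ofReal_norm, ENNReal.ofReal_ofNat]
      _ ≤ ∑' n, 2 * (‖((jap n ^ s : ℝ) : ℂ) * ζ t n‖ₑ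
            * (ENNReal.ofReal (jap n ^ s) * ‖G t n‖ₑ)) := ENNReal.sum_le_tsum F
      _ ≤ ∑' n, 2 * ENNReal.ofReal A * (‖((jap n ^ s : ℝ) : ℂ) * ζ t n‖ₑ
            * triConv (fun m => ‖((jap m ^ s : ℝ) : ℂ) * ζ t m‖ₑ) (α t) n) := by
          refine ENNReal.tsum_le_tsum fun n => ?_
          calc _ ≤ 2 * (‖((jap n ^ s : ℝ) : ℂ) * ζ t n‖ₑ * (ENNReal.ofReal A *
              triConv (fun m => ‖((jap m ^ s : ℝ) : ℂ) * ζ t m‖ₑ) (α t) n)) := by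
                exact mul_le_mul_right (mul_le_mul_right (hG t n) _) _
            _ = _ := by ring
      _ ≤ 2 * ENNReal.ofReal A * (6 * ENNReal.ofReal M ^ 2
            * ∑' n, ‖((jap n ^ s : ℝ) : ℂ) * ζ t n‖ₑ ^ 2) := by
          rw [ENNReal.tsum_mul_left]
          refine mul_le_mul_right ((tsum_mul_triConv_le _ _).trans ?_) _
          gcongr
          exact hα t
      _ = ENNReal.ofReal (12 * A * M ^ 2 * hnorm s (ζ t) ^ 2) := by
          rw [tsum_enorm_sq (hζ t), ENNReal.ofReal_mul (by positivity),
            ENNReal.ofReal_mul (by positivity), ENNReal.ofReal_mul (by norm_num),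
            ENNReal.ofReal_pow hM, ENNReal.ofReal_ofNat]
          ring

/-! ### Bounds for the cubic nonlinearity -/

/-- The constant `∑ₙ ⟨n⟩⁻²`. -/
def japConst : ℝ := ∑' n : ℤ, (jap n ^ 2)⁻¹

lemma summable_jap_inv_sq : Summable fun n : ℤ => (jap n ^ 2)⁻¹ := by
  have h : Summable fun n : ℤ => 1 / (n : ℝ) ^ 2 := Real.summable_one_div_int_pow.2 one_lt_two
  refine Summable.of_norm_bounded_eventually h ?_
  filter_upwards [(Set.finite_singleton (0 : ℤ)).compl_mem_cofinite] with n hn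
  have h0 : (n : ℝ) ≠ 0 := by simpa using hn
  rw [Real.norm_of_nonneg (by positivity), one_div, ← sq_abs (n : ℝ)]
  have : 0 < |(n : ℝ)| := abs_pos.2 h0
  gcongr
  exact le_max_right _ _

lemma sobTerm_one (z : ℤ → ℂ) (n : ℤ) : sobTerm 1 z n = jap n ^ 2 * ‖z n‖ ^ 2 := by
  simp [sobTerm]

/-- `|z(n)| ≤ ⟨n⟩⁻² + ⟨n⟩²|z(n)|²`, the source of the embedding `H¹ ⊂ ℓ¹`. -/
lemma norm_le_add_sobTerm (z : ℤ → ℂ) (n : ℤ) : ‖z n‖ ≤ (jap n ^ 2)⁻¹ + sobTerm 1 z n := by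
  have hj := jap_pos n
  have h1 : (jap n)⁻¹ * (jap n * ‖z n‖) = ‖z n‖ := by field_simp
  rw [sobTerm_one]
  have h2 : (jap n ^ 2)⁻¹ = (jap n)⁻¹ ^ 2 := by rw [inv_pow]
  rw [h2, ← mul_pow]
  nlinarith [two_mul_le_add_sq (jap n)⁻¹ (jap n * ‖z n‖), sq_nonneg (jap n)⁻¹,
    sq_nonneg (jap n * ‖z n‖)]

lemma InH.summable_norm {z : ℤ → ℂ} (hz : InH 1 z) : Summable fun n => ‖z n‖ :=
  Summable.of_nonneg_of_le (fun _ => norm_nonneg _) (norm_le_add_sobTerm z)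
    (summable_jap_inv_sq.add hz)

lemma InH.tsum_norm_le {z : ℤ → ℂ} (hz : InH 1 z) :
    ∑' n, ‖z n‖ ≤ japConst + hnorm 1 z ^ 2 := by
  rw [hnorm_sq, japConst, ← summable_jap_inv_sq.tsum_add hz]
  exact hz.summable_norm.tsum_le_tsum (norm_le_add_sobTerm z) (summable_jap_inv_sq.add hz)

lemma summable_NLterm {z : ℤ → ℂ} (hz : Summable fun n => ‖z n‖) (n : ℤ) :
    Summable fun p : ℤ × ℤ => z p.1 * z p.2 * (starRingEnd ℂ) (z (p.1 + p.2 - n)) := by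
  refine Summable.of_norm_bounded ((hz.mul_norm hz).mul_right (∑' n, ‖z n‖)) fun p => ?_
  rw [norm_mul _ ((starRingEnd ℂ) _), RCLike.norm_conj]
  gcongr
  exact hz.le_tsum _ fun _ _ => norm_nonneg _

lemma enorm_tsum_le {ι : Type*} (f : ι → ℂ) : ‖∑' i, f i‖ₑ ≤ ∑' i, ‖f i‖ₑ := by
  by_cases h : Summable fun i => ‖f i‖
  · rw [← ofReal_norm]
    refine (ENNReal.ofReal_le_ofReal (norm_tsum_le_tsum_norm h)).trans (le_of_eq ?_)
    rw [ENNReal.ofReal_tsum_of_nonneg (fun _ => norm_nonneg _) h]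
    simp
  · rw [tsum_eq_zero_of_not_summable (mt Summable.norm h)]
    simp

/-- Since `n = p + q - (p + q - n)`, one of the three interacting frequencies is at least of size
`⟨n⟩ / 3`. -/
lemma jap_rpow_le {s : ℝ} (hs : 0 ≤ s) (n p q : ℤ) :
    jap n ^ s ≤ 3 ^ s * (jap p ^ s + jap q ^ s + jap (p + q - n) ^ s) := by
  set r := p + q - n with hr
  set m := max (max (jap p) (jap q)) (jap r) with hm
  have hp : |(p : ℝ)| ≤ m := ((le_max_right _ _).trans (le_max_left _ _)).trans (le_max_left _ _)
  have hq : |(q : ℝ)| ≤ m := ((le_max_right _ _).trans (le_max_right _ _)).trans (le_max_left _ _)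
  have hr' : |(r : ℝ)| ≤ m := (le_max_right _ _).trans (le_max_right _ _)
  have hm1 : 1 ≤ m := (one_le_jap r).trans (le_max_right _ _)
  have hn : jap n ≤ 3 * m := by
    refine max_le (by linarith) ?_
    have : (n : ℝ) = p + q - r := by rw [hr]; push_cast; ring
    rw [this]
    have h1 := abs_sub ((p : ℝ) + q) r
    have h2 := abs_add_le (p : ℝ) q
    linarith
  have hms : m ^ s ≤ jap p ^ s + jap q ^ s + jap r ^ s := by
    have h1 := Real.rpow_pos_of_pos (jap_pos p) s
    have h2 := Real.rpow_pos_of_pos (jap_pos q) s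
    have h3 := Real.rpow_pos_of_pos (jap_pos r) s
    rcases max_choice (max (jap p) (jap q)) (jap r) with h | h
    · rcases max_choice (jap p) (jap q) with h' | h' <;> rw [hm, h, h'] <;> linarith
    · rw [hm, h]; linarith
  calc jap n ^ s ≤ (3 * m) ^ s := Real.rpow_le_rpow (jap_pos n).le hn hs
    _ = 3 ^ s * m ^ s := Real.mul_rpow (by norm_num) (by linarith)
    _ ≤ _ := by gcongr

/-- Tame estimate: the weight `⟨n⟩^s` falls on one factor only, the other two being measured without
weight. -/
lemma weight_mul_NLterm_le {s : ℝ} (hs : 0 ≤ s) (z : ℤ → ℂ) (n : ℤ) :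
    ENNReal.ofReal (jap n ^ s) * ‖-(2 * Complex.I * NLterm z n)‖ₑ ≤
      ENNReal.ofReal (2 * 3 ^ s) *
        triConv (fun m => ‖((jap m ^ s : ℝ) : ℂ) * z m‖ₑ) (fun m => ‖z m‖ₑ) n := by
  have hj : ∀ m, 0 ≤ jap m ^ s := fun m => (Real.rpow_pos_of_pos (jap_pos m) s).le
  have h2 : ‖(2 : ℂ)‖ₑ = 2 := by rw [← ofReal_norm]; simp
  have hI : ‖Complex.I‖ₑ = 1 := by rw [← ofReal_norm]; simp
  have hw : ∀ m, ‖((jap m ^ s : ℝ) : ℂ)‖ₑ = ENNReal.ofReal (jap m ^ s) := fun m => by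
    rw [← ofReal_norm, Complex.norm_real, Real.norm_of_nonneg (hj m)]
  rw [enorm_neg, enorm_mul, enorm_mul, h2, hI, mul_one, ENNReal.ofReal_mul (by norm_num),
    ENNReal.ofReal_ofNat, mul_left_comm, mul_assoc]
  refine mul_le_mul_right ?_ _
  calc ENNReal.ofReal (jap n ^ s) * ‖NLterm z n‖ₑ
      ≤ ENNReal.ofReal (jap n ^ s) * ∑' p : ℤ × ℤ, ‖z p.1‖ₑ * ‖z p.2‖ₑ * ‖z (p.1 + p.2 - n)‖ₑ := by
        refine mul_le_mul_right ((enorm_tsum_le _).trans (le_of_eq (tsum_congr fun p => ?_))) _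
        rw [enorm_mul, enorm_mul, ← ofReal_norm ((starRingEnd ℂ) _), RCLike.norm_conj, ofReal_norm]
    _ ≤ _ := by
        rw [triConv, ← ENNReal.tsum_mul_left, ← ENNReal.tsum_mul_left]
        refine ENNReal.tsum_le_tsum fun p => ?_
        have h := ENNReal.ofReal_le_ofReal (jap_rpow_le hs n p.1 p.2)
        rw [ENNReal.ofReal_mul (by positivity), ENNReal.ofReal_add (add_nonneg (hj _) (hj _)) (hj _),
          ENNReal.ofReal_add (hj _) (hj _)] at h
        refine (mul_le_mul_left h _).trans (le_of_eq ?_)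
        simp only [enorm_mul, hw]
        ring

lemma NLterm_sub_le {z u : ℤ → ℂ} (hz : Summable fun n => ‖z n‖) (hu : Summable fun n => ‖u n‖)
    (n : ℤ) :
    ‖-(2 * Complex.I * (NLterm z n - NLterm u n))‖ₑ ≤
      2 * triConv (fun m => ‖z m - u m‖ₑ) (fun m => ‖z m‖ₑ + ‖u m‖ₑ) n := by
  have h2 : ‖(2 : ℂ)‖ₑ = 2 := by rw [← ofReal_norm]; simp
  have hI : ‖Complex.I‖ₑ = 1 := by rw [← ofReal_norm]; simp
  rw [enorm_neg, enorm_mul, enorm_mul, h2, hI, mul_one]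
  refine mul_le_mul_right ?_ _
  rw [NLterm, NLterm, ← (summable_NLterm hz n).tsum_sub (summable_NLterm hu n)]
  refine (enorm_tsum_le _).trans (ENNReal.tsum_le_tsum fun p => ?_)
  set r := p.1 + p.2 - n
  have hconj : ∀ w : ℂ, ‖(starRingEnd ℂ) w‖ₑ = ‖w‖ₑ := fun w => by
    rw [← ofReal_norm, RCLike.norm_conj, ofReal_norm]
  have heq : z p.1 * z p.2 * (starRingEnd ℂ) (z r) - u p.1 * u p.2 * (starRingEnd ℂ) (u r)
      = (z p.1 - u p.1) * z p.2 * (starRingEnd ℂ) (z r)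
        + u p.1 * (z p.2 - u p.2) * (starRingEnd ℂ) (z r)
        + u p.1 * u p.2 * (starRingEnd ℂ) (z r - u r) := by
    rw [map_sub]; ring
  rw [heq]
  refine (enorm_add_le _ _).trans (add_le_add ((enorm_add_le _ _).trans (add_le_add ?_ ?_)) ?_) <;>
  · simp only [enorm_mul, hconj]
    gcongr <;> first | exact le_self_add | exact le_add_self

/-! ### Fourier synthesis of `ℓ¹` sequences -/

/-- The continuous function `∑ₙ z(n) e^{2πinx}` on the circle; meaningful for `z ∈ ℓ¹`. -/
def synth (z : ℤ → ℂ) : C(UnitAddCircle, ℂ) := ∑' n, z n • fourier n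

/-- The Haar probability measure on the circle. -/
local notation "haar" => (AddCircle.haarAddCircle : Measure UnitAddCircle)

lemma summable_synth {z : ℤ → ℂ} (hz : Summable fun n => ‖z n‖) :
    Summable fun n => ‖z n • (fourier n : C(UnitAddCircle, ℂ))‖ := by
  simpa [norm_smul, fourier_norm] using hz

lemma hasSum_synth {z : ℤ → ℂ} (hz : Summable fun n => ‖z n‖) :
    HasSum (fun n => z n • (fourier n : C(UnitAddCircle, ℂ))) (synth z) :=
  (summable_synth hz).of_norm.hasSum

lemma norm_synth_le {z : ℤ → ℂ} (hz : Summable fun n => ‖z n‖) : ‖synth z‖ ≤ ∑' n, ‖z n‖ := by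
  refine (norm_tsum_le_tsum_norm (summable_synth hz)).trans (le_of_eq ?_)
  simp [norm_smul, fourier_norm]

lemma synth_sub {z w : ℤ → ℂ} (hz : Summable fun n => ‖z n‖) (hw : Summable fun n => ‖w n‖) :
    synth (fun n => z n - w n) = synth z - synth w := by
  refine HasSum.tsum_eq ?_
  have h : ∀ n, (z n - w n) • (fourier n : C(UnitAddCircle, ℂ))
      = z n • fourier n - w n • fourier n := fun n => by
    ext x
    simp only [ContinuousMap.smul_apply, ContinuousMap.sub_apply, smul_eq_mul, sub_mul]
  simpa only [h] using (hasSum_synth hz).sub (hasSum_synth hw)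

lemma integrable_circle {E : Type*} [NormedAddCommGroup E] {f : UnitAddCircle → E}
    (hf : Continuous f) : Integrable f haar :=
  hf.integrable_of_hasCompactSupport (HasCompactSupport.of_compactSpace f)

/-- The functional `F ↦ ∫ F` on continuous functions on the circle. -/
def circleInt : C(UnitAddCircle, ℂ) →L[ℂ] ℂ :=
  LinearMap.mkContinuous
    { toFun := fun F => ∫ x, F x ∂haar
      map_add' := fun F G => integral_add (integrable_circle F.continuous)
        (integrable_circle G.continuous)
      map_smul' := fun c F => integral_const_mul c _ } 1 fun F => by
    have := norm_integral_le_of_norm_le_const (μ := haar)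
      (Eventually.of_forall fun x => F.norm_coe_le_norm x)
    simpa using this

lemma circleInt_apply (F : C(UnitAddCircle, ℂ)) : circleInt F = ∫ x, F x ∂haar := rfl

lemma circleInt_fourier (n : ℤ) : circleInt (fourier n) = if n = 0 then 1 else 0 := by
  have h := congrFun (fourierCoeff_fourier (T := 1) n) 0
  rw [fourierCoeff] at h
  simp only [neg_zero, fourier_zero, one_smul] at h
  rw [circleInt_apply, h, Pi.single_apply]
  simp [eq_comm]

lemma fourier_mul (m n : ℤ) :
    (fourier m * fourier n : C(UnitAddCircle, ℂ)) = fourier (m + n) := by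
  ext x; simp

lemma star_fourier (n : ℤ) : star (fourier n : C(UnitAddCircle, ℂ)) = fourier (-n) := by
  ext x; simp

/-- Parseval's identity, pairing a continuous function with an `ℓ¹` Fourier series. -/
lemma hasSum_parseval (F : C(UnitAddCircle, ℂ)) {h : ℤ → ℂ} (hh : Summable fun n => ‖h n‖) :
    HasSum (fun n => (starRingEnd ℂ) (h n) * circleInt (F * fourier (-n)))
      (circleInt (F * star (synth h))) := by
  have h1 := (((hasSum_synth hh).star).mul_left F).mapL circleInt
  have h2 : ∀ n, circleInt (F * star (h n • fourier n))
      = (starRingEnd ℂ) (h n) * circleInt (F * fourier (-n)) := fun n => by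
    rw [star_smul, star_fourier, mul_smul_comm, map_smul, smul_eq_mul, starRingEnd_apply]
  simpa only [h2] using h1

lemma circleInt_synth_mul {z : ℤ → ℂ} (hz : Summable fun n => ‖z n‖) (n : ℤ) :
    circleInt (synth z * fourier (-n)) = z n := by
  have h1 := ((hasSum_synth hz).mul_right (fourier (-n))).mapL circleInt
  refine h1.unique ?_
  convert hasSum_ite_eq n (z n) using 2 with m
  rw [smul_mul_assoc, fourier_mul, map_smul, circleInt_fourier]
  by_cases h : m = n
  · simp [h]
  · simp [h, add_neg_eq_zero]

/-- `NLterm z n` is the `n`-th Fourier coefficient of `|U|²U`, where `U` has coefficients `z`. -/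
lemma circleInt_cubic {z : ℤ → ℂ} (hz : Summable fun n => ‖z n‖) (n : ℤ) :
    circleInt (synth z * synth z * star (synth z) * fourier (-n)) = NLterm z n := by
  have hsm : Summable fun p : ℤ × ℤ => (z p.1 • (fourier p.1 : C(UnitAddCircle, ℂ)))
      * (z p.2 • (fourier p.2 : C(UnitAddCircle, ℂ))) :=
    summable_mul_of_summable_norm (f := fun n => z n • (fourier n : C(UnitAddCircle, ℂ)))
      (g := fun n => z n • (fourier n : C(UnitAddCircle, ℂ))) (summable_synth hz) (summable_synth hz)
  have hmul := (hasSum_synth hz).mul (hasSum_synth hz) hsm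
  have h1 := ((hmul.mul_right (star (synth z))).mul_right (fourier (-n))).mapL circleInt
  rw [← h1.tsum_eq, NLterm]
  refine tsum_congr fun p => ?_
  have h2 := (hasSum_parseval (fourier (p.1 + p.2 - n)) hz).tsum_eq
  have h3 : circleInt (fourier (p.1 + p.2 - n) * star (synth z))
      = (starRingEnd ℂ) (z (p.1 + p.2 - n)) := by
    rw [← h2, tsum_eq_single (p.1 + p.2 - n)]
    · rw [fourier_mul, add_neg_cancel, circleInt_fourier]; simp
    · intro m hm
      rw [fourier_mul, circleInt_fourier, if_neg, mul_zero]
      intro h0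
      exact hm (by linarith)
  have h4 : z p.1 • fourier p.1 * z p.2 • fourier p.2 * star (synth z) * fourier (-n)
      = (z p.1 * z p.2) • (fourier (p.1 + p.2 - n) * star (synth z)) := by
    rw [sub_eq_add_neg, ← fourier_mul, ← fourier_mul]
    ext x
    simp only [ContinuousMap.mul_apply, ContinuousMap.smul_apply, smul_eq_mul]
    ring
  rw [h4, map_smul, smul_eq_mul, h3]

/-! ### The energy -/

/-- The quartic part `∫₀¹ |U|⁴` of the energy, where `U` has Fourier coefficients `z ∈ ℓ¹`. -/
def quartic (z : ℤ → ℂ) : ℝ := ∫ x, ‖synth z x‖ ^ 4 ∂haar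

/-- The kinetic energy `∫₀¹ |∂ₓU|²` in terms of the Fourier coefficients `z` of `U`. -/
def kinetic (z : ℤ → ℂ) : ℝ := ∑' n : ℤ, 4 * Real.pi ^ 2 * (n : ℝ) ^ 2 * ‖z n‖ ^ 2

lemma hasSum_norm_sq {h : ℤ → ℂ} (hh : Summable fun n => ‖h n‖) :
    HasSum (fun n => ‖h n‖ ^ 2) (∫ x, ‖synth h x‖ ^ 2 ∂haar) := by
  have h1 := hasSum_parseval (synth h) hh
  simp only [circleInt_synth_mul hh, Complex.conj_mul'] at h1
  have h2 : circleInt (synth h * star (synth h)) = ((∫ x, ‖synth h x‖ ^ 2 ∂haar : ℝ) : ℂ) := by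
    rw [circleInt_apply, ← integral_complex_ofReal]
    refine integral_congr_ae (Eventually.of_forall fun x => ?_)
    simp [Complex.mul_conj']
  rw [h2] at h1
  exact_mod_cast h1

lemma hasSum_cubic_pairing {w h : ℤ → ℂ} (hw : Summable fun n => ‖w n‖)
    (hh : Summable fun n => ‖h n‖) :
    HasSum (fun n => ((starRingEnd ℂ) (h n) * NLterm w n).re)
      (∫ x, (synth w x * synth w x * star (synth w x) * star (synth h x)).re ∂haar) := by
  have h1 := hasSum_parseval (synth w * synth w * star (synth w)) hh
  simp only [circleInt_cubic hw] at h1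
  have h2 := h1.mapL Complex.reCLM
  rw [circleInt_apply] at h2
  simp only [Complex.reCLM_apply] at h2
  convert h2 using 1
  exact Complex.reCLM.integral_comp_comm (integrable_circle
    (synth w * synth w * star (synth w) * star (synth h)).continuous)

lemma quartic_nonneg (z : ℤ → ℂ) : 0 ≤ quartic z := integral_nonneg fun _ => by positivity

lemma quartic_le {z : ℤ → ℂ} (hz : Summable fun n => ‖z n‖) : quartic z ≤ (∑' n, ‖z n‖) ^ 4 := by
  have h : ∀ x, ‖synth z x‖ ^ 4 ≤ (∑' n, ‖z n‖) ^ 4 := fun x =>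
    pow_le_pow_left₀ (norm_nonneg _) (((synth z).norm_coe_le_norm x).trans (norm_synth_le hz)) 4
  refine (integral_mono (integrable_circle (by fun_prop)) (integrable_const _) h).trans ?_
  simp

/-- The `L²` norm on the circle is controlled by the `L⁴` norm. -/
lemma tsum_norm_sq_le {z : ℤ → ℂ} (hz : Summable fun n => ‖z n‖) :
    ∑' n, ‖z n‖ ^ 2 ≤ 1 + quartic z := by
  rw [(hasSum_norm_sq hz).tsum_eq]
  have h : ∀ x, ‖synth z x‖ ^ 2 ≤ 1 + ‖synth z x‖ ^ 4 := fun x => by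
    nlinarith [sq_nonneg (‖synth z x‖ ^ 2 - 1), sq_nonneg (‖synth z x‖ ^ 2)]
  refine (integral_mono (integrable_circle (by fun_prop)) (integrable_circle (by fun_prop)) h).trans
    (le_of_eq ?_)
  rw [integral_add (integrable_const _) (integrable_circle (by fun_prop)), quartic]
  simp

/-- Second-order Taylor estimate for `v ↦ |v|⁴`. -/
lemma norm_pow_four_taylor (v h : ℂ) :
    |‖v + h‖ ^ 4 - ‖v‖ ^ 4 - 4 * (v * v * star v * star h).re|
      ≤ 10 * (‖v‖ ^ 2 + ‖h‖ ^ 2) * ‖h‖ ^ 2 := by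
  set B := 2 * (v * star h).re with hB
  have h1 : ‖v + h‖ ^ 2 = ‖v‖ ^ 2 + B + ‖h‖ ^ 2 := by
    simp only [hB, Complex.sq_norm, Complex.normSq_apply, Complex.star_def]
    simp
    ring
  have h2 : (v * v * star v * star h).re = ‖v‖ ^ 2 * (v * star h).re := by
    simp only [Complex.sq_norm, Complex.normSq_apply, Complex.star_def]
    simp
    ring
  have h3 : B ^ 2 ≤ 4 * ‖v‖ ^ 2 * ‖h‖ ^ 2 := by
    have h4 := Complex.abs_re_le_norm (v * star h)
    rw [norm_mul, norm_star] at h4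
    have h5 := pow_le_pow_left₀ (abs_nonneg _) h4 2
    rw [sq_abs] at h5
    rw [hB]
    nlinarith
  have h4 : ‖v + h‖ ^ 4 - ‖v‖ ^ 4 - 4 * (v * v * star v * star h).re
      = 2 * ‖v‖ ^ 2 * ‖h‖ ^ 2 + (B + ‖h‖ ^ 2) ^ 2 := by
    rw [h2, show ‖v + h‖ ^ 4 = (‖v + h‖ ^ 2) ^ 2 by ring, h1]
    ring
  rw [h4, abs_of_nonneg (by positivity)]
  nlinarith [sq_nonneg (B - ‖h‖ ^ 2)]

/-- Second-order Taylor estimate for the quartic energy, with linear part `4 Re ⟨h, |w|²w⟩`. -/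
lemma quartic_taylor {w h z : ℤ → ℂ} (hw : Summable fun n => ‖w n‖) (hh : Summable fun n => ‖h n‖)
    (hz : synth z = synth w + synth h) :
    |quartic z - quartic w - 4 * ∑' n, ((starRingEnd ℂ) (h n) * NLterm w n).re|
      ≤ 10 * (‖synth w‖ ^ 2 + ‖synth h‖ ^ 2) * ∑' n, ‖h n‖ ^ 2 := by
  have i1 : Integrable (fun x => ‖synth z x‖ ^ 4) haar := integrable_circle (by fun_prop)
  have i2 : Integrable (fun x => ‖synth w x‖ ^ 4) haar := integrable_circle (by fun_prop)
  have i3 : Integrable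
      (fun x => 4 * (synth w x * synth w x * star (synth w x) * star (synth h x)).re) haar :=
    integrable_circle (continuous_const.mul (Complex.continuous_re.comp (by fun_prop)))
  have i12 : Integrable (fun x => ‖synth z x‖ ^ 4 - ‖synth w x‖ ^ 4) haar := i1.sub i2
  rw [(hasSum_cubic_pairing hw hh).tsum_eq, (hasSum_norm_sq hh).tsum_eq, quartic, quartic,
    ← integral_const_mul, ← integral_const_mul, ← integral_sub i1 i2, ← integral_sub i12 i3]
  refine (norm_integral_le_integral_norm _).trans
    (integral_mono (i12.sub i3).norm (integrable_circle (by fun_prop)) fun x => ?_)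
  simp only [Pi.sub_apply, Real.norm_eq_abs]
  rw [hz, ContinuousMap.add_apply]
  refine (norm_pow_four_taylor _ _).trans ?_
  gcongr <;> exact ContinuousMap.norm_coe_le_norm _ x

lemma sq_le_jap_sq (n : ℤ) : (n : ℝ) ^ 2 ≤ jap n ^ 2 := by
  rw [← sq_abs (n : ℝ)]
  exact pow_le_pow_left₀ (abs_nonneg _) (le_max_right _ _) 2

lemma kinetic_term_le (z : ℤ → ℂ) (n : ℤ) :
    4 * Real.pi ^ 2 * (n : ℝ) ^ 2 * ‖z n‖ ^ 2 ≤ 4 * Real.pi ^ 2 * sobTerm 1 z n := by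
  rw [sobTerm_one, mul_assoc]
  exact mul_le_mul_of_nonneg_left (mul_le_mul_of_nonneg_right (sq_le_jap_sq n) (by positivity))
    (by positivity)

lemma summable_kinetic {z : ℤ → ℂ} (hz : InH 1 z) :
    Summable fun n : ℤ => 4 * Real.pi ^ 2 * (n : ℝ) ^ 2 * ‖z n‖ ^ 2 :=
  Summable.of_nonneg_of_le (fun _ => by positivity) (kinetic_term_le z) (hz.mul_left _)

lemma kinetic_nonneg (z : ℤ → ℂ) : 0 ≤ kinetic z := tsum_nonneg fun _ => by positivity

lemma kinetic_le {z : ℤ → ℂ} (hz : InH 1 z) : kinetic z ≤ 4 * Real.pi ^ 2 * hnorm 1 z ^ 2 := by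
  rw [hnorm_sq, ← tsum_mul_left]
  exact (summable_kinetic hz).tsum_le_tsum (kinetic_term_le z) (hz.mul_left _)

/-- The defocusing energy controls the `H¹` norm, including the zero mode. -/
lemma hnorm_one_sq_le {z : ℤ → ℂ} (hz : InH 1 z) :
    hnorm 1 z ^ 2 ≤ 1 + (kinetic z + quartic z) := by
  have hs := (hasSum_norm_sq hz.summable_norm).summable
  have h1 := tsum_norm_sq_le hz.summable_norm
  have h2 : hnorm 1 z ^ 2 ≤ ∑' n, ‖z n‖ ^ 2 + kinetic z := by
    rw [hnorm_sq, kinetic, ← hs.tsum_add (summable_kinetic hz)]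
    refine hz.tsum_le_tsum (fun n => ?_) (hs.add (summable_kinetic hz))
    rw [sobTerm_one]
    have hj : jap n ^ 2 ≤ 1 + 4 * Real.pi ^ 2 * (n : ℝ) ^ 2 := by
      have hpi : 1 ≤ 4 * Real.pi ^ 2 := by nlinarith [Real.pi_gt_three]
      have h3 : (n : ℝ) ^ 2 ≤ 4 * Real.pi ^ 2 * (n : ℝ) ^ 2 := by nlinarith [sq_nonneg (n : ℝ)]
      rcases max_choice (1 : ℝ) |(n : ℝ)| with h | h <;> rw [jap, h]
      · nlinarith [sq_nonneg (n : ℝ)]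
      · rw [sq_abs]; linarith
    calc jap n ^ 2 * ‖z n‖ ^ 2 ≤ (1 + 4 * Real.pi ^ 2 * (n : ℝ) ^ 2) * ‖z n‖ ^ 2 := by gcongr
      _ = _ := by ring
  linarith

/-- Interpolation of `H¹` between `L²` and `H²`. -/
lemma hnorm_one_sq_le_mul {h : ℤ → ℂ} (hh : InH 2 h) :
    hnorm 1 h ^ 2 ≤ hnorm 0 h * hnorm 2 h := by
  have h0 : InH 0 h := hh.mono (by norm_num)
  rw [← norm_emb h0, ← norm_emb hh, hnorm_sq]
  refine le_trans (le_of_eq ?_) (re_inner_le_norm (𝕜 := ℂ) _ _)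
  have h1 := (lp.hasSum_inner (𝕜 := ℂ) (emb 0 h h0) (emb 2 h hh)).mapL Complex.reCLM
  refine Eq.trans (tsum_congr fun n => ?_) h1.tsum_eq
  rw [sobTerm_one]
  simp only [emb_apply, RCLike.inner_apply, Complex.reCLM_apply, Real.rpow_zero, Complex.ofReal_one,
    one_mul, mul_assoc, Complex.mul_conj', Real.rpow_ofNat]
  norm_cast

/-- The part of the energy increment that is linear in `z - w`, at a single frequency. The term
`δ I |z'|²` coming from `δ z'` is purely imaginary and drops out. -/
lemma first_variation_term (z w z' N : ℂ) (K δ : ℝ)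
    (heq : z' = Complex.I * (-(K : ℂ)) * w - 2 * Complex.I * N) :
    K * ‖z‖ ^ 2 - K * ‖w‖ ^ 2 - K * ‖z - w‖ ^ 2 + 4 * ((starRingEnd ℂ) (z - w) * N).re
      = 2 * (Complex.I * ((starRingEnd ℂ) (z - w - δ • z') * z')).re := by
  subst heq
  simp only [Complex.sq_norm, Complex.normSq_apply]
  simp
  ring

/-- First variation of the energy at `w` along the flow direction `z'`: the increment `h` may be
replaced by its deviation `r = h - δ z'`, since `z'` is `-i` times the gradient of the energy. -/
lemma energy_increment {w z z' : ℤ → ℂ} (hw : InH 2 w) (hz : InH 2 z) (hz' : InH 0 z')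
    (heq : ∀ n, z' n = Complex.I * (-(4 * (Real.pi : ℂ) ^ 2 * (n : ℂ) ^ 2)) * w n
        - 2 * Complex.I * NLterm w n) (δ : ℝ) :
    |(kinetic z + quartic z) - (kinetic w + quartic w)| ≤
      2 * hnorm 0 (fun n => z n - w n - δ • z' n) * hnorm 0 z'
      + 4 * Real.pi ^ 2 * (hnorm 0 (fun n => z n - w n) * hnorm 2 (fun n => z n - w n))
      + 10 * (‖synth w‖ ^ 2 + (japConst + hnorm 2 (fun n => z n - w n) ^ 2) ^ 2)
        * hnorm 0 (fun n => z n - w n) ^ 2 := by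
  set h : ℤ → ℂ := fun n => z n - w n with hh
  have hh2 : InH 2 h := hz.sub hw
  have hh1 : InH 1 h := hh2.mono (by norm_num)
  have hw1 : InH 1 w := hw.mono (by norm_num)
  have hz1 : InH 1 z := hz.mono (by norm_num)
  have hh0 : InH 0 h := hh2.mono (by norm_num)
  set r : ℤ → ℂ := fun n => h n - δ • z' n with hr
  have hr0 : InH 0 r := hh0.sub (hz'.smul δ)
  have hsyn : synth z = synth w + synth h := by
    rw [hh, synth_sub hz1.summable_norm hw1.summable_norm]; abel
  have hQ := quartic_taylor hw1.summable_norm hh1.summable_norm hsyn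
  set Q := ∑' n, ((starRingEnd ℂ) (h n) * NLterm w n).re with hQdef
  have hQs : HasSum (fun n => ((starRingEnd ℂ) (h n) * NLterm w n).re) Q :=
    (hasSum_cubic_pairing hw1.summable_norm hh1.summable_norm).summable.hasSum
  have hfirst : HasSum (fun n => 2 * (Complex.I * ((starRingEnd ℂ) (r n) * z' n)).re)
      (kinetic z - kinetic w - kinetic h + 4 * Q) := by
    have key : ∀ n : ℤ, 4 * Real.pi ^ 2 * (n : ℝ) ^ 2 * ‖z n‖ ^ 2
        - 4 * Real.pi ^ 2 * (n : ℝ) ^ 2 * ‖w n‖ ^ 2 - 4 * Real.pi ^ 2 * (n : ℝ) ^ 2 * ‖h n‖ ^ 2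
        + 4 * ((starRingEnd ℂ) (h n) * NLterm w n).re
        = 2 * (Complex.I * ((starRingEnd ℂ) (r n) * z' n)).re := fun n =>
      first_variation_term _ _ _ _ _ _ (by rw [heq n]; push_cast; ring)
    have h1 := (((summable_kinetic hz1).hasSum.sub (summable_kinetic hw1).hasSum).sub
      (summable_kinetic hh1).hasSum).add (hQs.mul_left 4)
    simp only [key] at h1
    exact h1
  have hinner : HasSum (fun n => 2 * (Complex.I * ((starRingEnd ℂ) (r n) * z' n)).re)
      (2 * (Complex.I * inner ℂ (emb 0 r hr0) (emb 0 z' hz')).re) := by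
    have h1 := (((lp.hasSum_inner (𝕜 := ℂ) (emb 0 r hr0) (emb 0 z' hz')).mul_left
      Complex.I).mapL Complex.reCLM).mul_left 2
    simpa [emb_apply, mul_comm] using h1
  have hval := hfirst.unique hinner
  have hbound : |2 * (Complex.I * inner ℂ (emb 0 r hr0) (emb 0 z' hz')).re|
      ≤ 2 * hnorm 0 r * hnorm 0 z' := by
    rw [abs_mul, abs_two, mul_assoc, ← norm_emb hr0, ← norm_emb hz']
    gcongr
    refine (Complex.abs_re_le_norm _).trans ?_
    rw [norm_mul, Complex.norm_I, one_mul]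
    exact norm_inner_le_norm _ _
  have hkin : kinetic h ≤ 4 * Real.pi ^ 2 * (hnorm 0 h * hnorm 2 h) := by
    refine (kinetic_le hh1).trans ?_
    gcongr
    exact hnorm_one_sq_le_mul hh2
  have hsynh : ‖synth h‖ ≤ japConst + hnorm 2 h ^ 2 := by
    refine ((norm_synth_le hh1.summable_norm).trans hh1.tsum_norm_le).trans ?_
    gcongr
    · exact hnorm_nonneg _ _
    · exact hnorm_mono (by norm_num) hh2
  have hsum0 : ∑' n, ‖h n‖ ^ 2 = hnorm 0 h ^ 2 := by
    rw [hnorm_sq]; exact tsum_congr fun n => (sobTerm_zero h n).symm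
  have hQ' : |quartic z - quartic w - 4 * Q| ≤
      10 * (‖synth w‖ ^ 2 + (japConst + hnorm 2 h ^ 2) ^ 2) * hnorm 0 h ^ 2 := by
    rw [hsum0] at hQ
    refine hQ.trans ?_
    gcongr
  rw [← hval] at hbound
  have hk0 := kinetic_nonneg h
  rw [abs_le] at hbound hQ' ⊢
  constructor <;> linarith [hbound.1, hbound.2, hQ'.1, hQ'.2]

lemma hnorm_sub_le {s : ℝ} {z w : ℤ → ℂ} (hz : InH s z) (hw : InH s w) :
    hnorm s (fun n => z n - w n) ≤ hnorm s z + hnorm s w := by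
  rw [← norm_emb (hz.sub hw), ← norm_emb hz, ← norm_emb hw, emb_sub]
  exact norm_sub_le _ _

lemma hnorm_smul (s c : ℝ) (z : ℤ → ℂ) : hnorm s (fun n => c • z n) = |c| * hnorm s z := by
  have h : ∀ n, sobTerm s (fun n => c • z n) n = c ^ 2 * sobTerm s z n := fun n => by
    simp only [sobTerm, norm_smul, Real.norm_eq_abs, mul_pow, sq_abs]
    ring
  rw [hnorm, hnorm, tsum_congr h, tsum_mul_left, Real.sqrt_mul (sq_nonneg c), Real.sqrt_sq_eq_abs]

/-- The difference quotient of the energy along an `H²` solution tends to zero. Only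
differentiability in `L²` is available, so this rests on `energy_increment` rather than on
differentiating the kinetic energy term by term. -/
lemma hasDerivAt_energy {z : ℝ → ℤ → ℂ} {z' : ℤ → ℂ} {t₀ : ℝ} (hz : ∀ t, InH 2 (z t))
    (hc : HCont 2 z) (hz' : InH 0 z') (hd : HDerivAt 0 z z' t₀)
    (heq : ∀ n, z' n = Complex.I * (-(4 * (Real.pi : ℂ) ^ 2 * (n : ℂ) ^ 2)) * z t₀ n
        - 2 * Complex.I * NLterm (z t₀) n) :
    HasDerivAt (fun t => kinetic (z t) + quartic (z t)) 0 t₀ := by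
  rw [hasDerivAt_iff_tendsto_slope]
  have hη : Tendsto (fun t => hnorm 2 (fun n => z t n - z t₀ n)) (𝓝[≠] t₀) (𝓝 0) :=
    (hc t₀).mono_left nhdsWithin_le_nhds
  set G : ℝ × ℝ → ℝ := fun p => 2 * p.1 * hnorm 0 z' + (p.1 + hnorm 0 z') *
    (4 * Real.pi ^ 2 * p.2 + 10 * (‖synth (z t₀)‖ ^ 2 + (japConst + p.2 ^ 2) ^ 2) * p.2) with hG
  have hGc : Continuous G := by fun_prop
  have hG0 : G (0, 0) = 0 := by simp [hG]
  have hlim := (hGc.tendsto (0, 0)).comp (hd.prodMk_nhds hη)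
  rw [hG0] at hlim
  refine squeeze_zero_norm' ?_ hlim
  filter_upwards [self_mem_nhdsWithin] with t ht
  have hδ : 0 < |t - t₀| := abs_pos.2 (sub_ne_zero.2 ht)
  have hinc := energy_increment (hz t₀) (hz t) hz' heq (t - t₀)
  have hh2 : InH 2 (fun n => z t n - z t₀ n) := (hz t).sub (hz t₀)
  have hh0 : InH 0 (fun n => z t n - z t₀ n) := hh2.mono (by norm_num)
  have hr0 := hh0.sub (hz'.smul (t - t₀))
  have hle : hnorm 0 (fun n => z t n - z t₀ n) ≤ hnorm 2 (fun n => z t n - z t₀ n) :=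
    hnorm_mono (by norm_num) hh2
  have htri : hnorm 0 (fun n => z t n - z t₀ n)
      ≤ hnorm 0 (fun n => z t n - z t₀ n - (t - t₀) • z' n) + |t - t₀| * hnorm 0 z' := by
    have h1 := emb_sub hh0 (hz'.smul (t - t₀))
    rw [← hnorm_smul, ← norm_emb hh0, ← norm_emb hr0, ← norm_emb (hz'.smul (t - t₀)), h1]
    exact norm_le_norm_sub_add _ _
  have hr : hnorm 0 (fun n => z t n - z t₀ n - (t - t₀) • z' n)
      = hnorm 0 (fun n => z t n - z t₀ n - (t - t₀) • z' n) / |t - t₀| * |t - t₀| := by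
    field_simp
  have hz'0 := hnorm_nonneg 0 z'
  have hη0 := hnorm_nonneg 2 (fun n => z t n - z t₀ n)
  have hL0 := hnorm_nonneg 0 (fun n => z t n - z t₀ n)
  simp only [slope_def_field, Function.comp, hG, norm_div, Real.norm_eq_abs]
  rw [div_le_iff₀ hδ]
  set ρ := hnorm 0 (fun n => z t n - z t₀ n - (t - t₀) • z' n) / |t - t₀|
  rw [hr] at htri hinc
  set η := hnorm 2 (fun n => z t n - z t₀ n)
  set l := hnorm 0 (fun n => z t n - z t₀ n)
  set K := ‖synth (z t₀)‖ ^ 2 + (japConst + η ^ 2) ^ 2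
  have hK : 0 ≤ K := by positivity
  have h1 : l ^ 2 ≤ l * η := by rw [sq]; gcongr
  have h2 : l * η ≤ (ρ * |t - t₀| + |t - t₀| * hnorm 0 z') * η := by gcongr
  calc _ ≤ _ := hinc
    _ ≤ 2 * (ρ * |t - t₀|) * hnorm 0 z'
        + 4 * Real.pi ^ 2 * ((ρ * |t - t₀| + |t - t₀| * hnorm 0 z') * η)
        + 10 * K * ((ρ * |t - t₀| + |t - t₀| * hnorm 0 z') * η) := by
      gcongr
      exact h1.trans h2
    _ = _ := by ring

/-! ### A priori bounds for solutions -/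

namespace IsNLSSolution

variable {s : ℝ} {z : ℝ → ℤ → ℂ} {z₀ : ℤ → ℂ}

lemma mem (h : IsNLSSolution s z z₀) (t : ℝ) : InH s (z t) := h.2.1 t

lemma summable_norm (hs : 2 ≤ s) (h : IsNLSSolution s z z₀) (t : ℝ) : Summable fun n => ‖z t n‖ :=
  ((h.mem t).mono (by linarith : (1 : ℝ) ≤ s)).summable_norm

lemma energy_eq (hs : 2 ≤ s) (h : IsNLSSolution s z z₀) (t : ℝ) :
    kinetic (z t) + quartic (z t) = kinetic z₀ + quartic z₀ := by
  obtain ⟨h0, hz, hc, z', hz', hd, -, heq⟩ := h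
  have hd' : ∀ t, HasDerivAt (fun t => kinetic (z t) + quartic (z t)) 0 t := fun t =>
    hasDerivAt_energy (fun t => (hz t).mono hs) (hc.mono hs hz) ((hz' t).mono (by linarith))
      ((hd t).mono (by linarith) (fun t => (hz t).mono (by linarith)) (hz' t)) (heq t)
  rw [← h0]
  exact is_const_of_deriv_eq_zero (fun t => (hd' t).differentiableAt) (fun t => (hd' t).deriv) t 0

lemma hasDerivAt (hs : 2 ≤ s) (h : IsNLSSolution s z z₀) (n : ℤ) (t : ℝ) :
    HasDerivAt (fun t => z t n)
      (-(Complex.I * ((4 * Real.pi ^ 2 * (n : ℝ) ^ 2 : ℝ) : ℂ) * z t n)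
        + -(2 * Complex.I * NLterm (z t) n)) t := by
  obtain ⟨h0, hz, hc, z', hz', hd, -, heq⟩ := h
  have h1 := (hd t).hasDerivAt (by linarith) (fun t => (hz t).mono (by linarith)) (hz' t) n
  convert h1 using 1
  rw [heq]
  push_cast
  ring

/-- Conservation of energy bounds the `ℓ¹` norm of the Fourier coefficients for all times, in terms
of the `H¹` norm of the initial data. -/
lemma tsum_norm_le (hs : 2 ≤ s) (h : IsNLSSolution s z z₀) {R : ℝ} (hR : hnorm s z₀ ≤ R) (t : ℝ) :
    ∑' n, ‖z t n‖ ≤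
      japConst + (1 + (4 * Real.pi ^ 2 * R ^ 2 + (japConst + R ^ 2) ^ 4)) := by
  have h1s : (1 : ℝ) ≤ s := by linarith
  have hz1 := (h.mem t).mono h1s
  have h0 : InH s z₀ := h.1 ▸ h.mem 0
  have h01 := h0.mono h1s
  have hR1 : hnorm 1 z₀ ^ 2 ≤ R ^ 2 :=
    pow_le_pow_left₀ (hnorm_nonneg _ _) ((hnorm_mono h1s h0).trans hR) 2
  refine hz1.tsum_norm_le.trans (add_le_add_right ((hnorm_one_sq_le hz1).trans ?_) _)
  rw [h.energy_eq hs]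
  refine add_le_add_right (add_le_add ((kinetic_le h01).trans (by gcongr)) ?_) _
  refine (quartic_le h01.summable_norm).trans ?_
  refine pow_le_pow_left₀ (tsum_nonneg fun _ => norm_nonneg _) (h01.tsum_norm_le.trans ?_) 4
  gcongr

end IsNLSSolution

lemma tsum_enorm_eq {a : ℤ → ℂ} (ha : Summable fun n => ‖a n‖) :
    ∑' n, ‖a n‖ₑ = ENNReal.ofReal (∑' n, ‖a n‖) := by
  rw [ENNReal.ofReal_tsum_of_nonneg (fun _ => norm_nonneg _) ha]
  simp

namespace IsNLSSolution

variable {s : ℝ} {z u : ℝ → ℤ → ℂ} {z₀ u₀ : ℤ → ℂ}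

lemma hnorm_sq_le (hs : 2 ≤ s) (h : IsNLSSolution s z z₀) {M : ℝ}
    (hM : ∀ t, ∑' n, ‖z t n‖ ≤ M) (t : ℝ) :
    hnorm s (z t) ^ 2 ≤ hnorm s z₀ ^ 2 * Real.exp (12 * (2 * 3 ^ s) * M ^ 2 * |t|) := by
  have hM0 : 0 ≤ M := (tsum_nonneg fun _ => norm_nonneg _).trans (hM 0)
  rw [← h.1]
  refine hnorm_sq_le_exp (ω := fun n => 4 * Real.pi ^ 2 * (n : ℝ) ^ 2)
    (G := fun t n => -(2 * Complex.I * NLterm (z t) n)) (α := fun t n => ‖z t n‖ₑ)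
    (by positivity) hM0 h.mem h.2.2.1 (fun t n => h.hasDerivAt hs n t) (fun t => ?_)
    (fun t n => weight_mul_NLterm_le (by linarith) _ _) t
  rw [tsum_enorm_eq (h.summable_norm hs t)]
  exact ENNReal.ofReal_le_ofReal (hM t)

/-- Lipschitz dependence on the data in `L²`, uniform on sets of bounded data. -/
lemma hnorm_zero_sub_sq_le (hs : 2 ≤ s) (h : IsNLSSolution s z z₀) (h' : IsNLSSolution s u u₀)
    {M : ℝ} (hM : ∀ t, ∑' n, ‖z t n‖ ≤ M) (hM' : ∀ t, ∑' n, ‖u t n‖ ≤ M) (t : ℝ) :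
    hnorm 0 (fun n => z t n - u t n) ^ 2
      ≤ hnorm 0 (fun n => z₀ n - u₀ n) ^ 2 * Real.exp (12 * 2 * (M + M) ^ 2 * |t|) := by
  have hM0 : 0 ≤ M := (tsum_nonneg fun _ => norm_nonneg _).trans (hM 0)
  have hz0 : ∀ t, InH 0 (z t) := fun t => (h.mem t).mono (by linarith)
  have hu0 : ∀ t, InH 0 (u t) := fun t => (h'.mem t).mono (by linarith)
  have hcz : HCont 0 z := h.2.2.1.mono (by linarith) h.mem
  have hcu : HCont 0 u := h'.2.2.1.mono (by linarith) h'.mem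
  rw [← h.1, ← h'.1]
  refine hnorm_sq_le_exp (ζ := fun t n => z t n - u t n)
    (ω := fun n => 4 * Real.pi ^ 2 * (n : ℝ) ^ 2)
    (G := fun t n => -(2 * Complex.I * (NLterm (z t) n - NLterm (u t) n)))
    (α := fun t n => ‖z t n‖ₑ + ‖u t n‖ₑ)
    (by positivity) (by positivity) (fun t => (hz0 t).sub (hu0 t)) (fun t₀ => ?_) (fun t n => ?_)
    (fun t => ?_) (fun t n => ?_) t
  · have hlim := (hcz t₀).add (hcu t₀)
    rw [add_zero] at hlim
    refine squeeze_zero (fun _ => hnorm_nonneg _ _) (fun t => ?_) hlim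
    refine le_trans (le_of_eq ?_) (hnorm_sub_le ((hz0 t).sub (hz0 t₀)) ((hu0 t).sub (hu0 t₀)))
    congr 1
    funext n
    ring
  · refine ((h.hasDerivAt hs n t).sub (h'.hasDerivAt hs n t)).congr_deriv ?_
    ring
  · rw [ENNReal.tsum_add, tsum_enorm_eq (h.summable_norm hs t),
      tsum_enorm_eq (h'.summable_norm hs t), ENNReal.ofReal_add hM0 hM0]
    exact add_le_add (ENNReal.ofReal_le_ofReal (hM t)) (ENNReal.ofReal_le_ofReal (hM' t))
  · simpa using NLterm_sub_le (h.summable_norm hs t) (h'.summable_norm hs t) n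

end IsNLSSolution

/-- Rellich compactness: weak convergence in `H^s` with `s ≥ 1` implies strong convergence in
`L²`. -/
lemma WeakConv.tendsto_hnorm_zero {s : ℝ} (hs : 1 ≤ s) {z : ℕ → ℤ → ℂ} {zl : ℤ → ℂ}
    (hw : WeakConv s z zl) (hz : ∀ j, InH s (z j)) (hzl : InH s zl) :
    Tendsto (fun j => hnorm 0 (fun n => z j n - zl n) ^ 2) atTop (𝓝 0) := by
  obtain ⟨C, hC⟩ := hw.bounded hz hzl
  have hB : ∀ j n, ‖z j n - zl n‖ ^ 2 ≤ (C + hnorm s zl) ^ 2 * (jap n ^ 2)⁻¹ := fun j n => by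
    have hd : InH 1 (fun n => z j n - zl n) := ((hz j).sub hzl).mono hs
    have h1 : jap n ^ 2 * ‖z j n - zl n‖ ^ 2 ≤ (C + hnorm s zl) ^ 2 := by
      rw [← sobTerm_one (fun n => z j n - zl n)]
      refine (hd.le_tsum n fun m _ => sobTerm_nonneg _ _ m).trans ?_
      rw [← hnorm_sq]
      refine pow_le_pow_left₀ (hnorm_nonneg _ _) ?_ 2
      refine (hnorm_mono hs ((hz j).sub hzl)).trans ((hnorm_sub_le (hz j) hzl).trans ?_)
      exact add_le_add_left (hC j) _
    rw [← div_eq_mul_inv, le_div_iff₀ (pow_pos (jap_pos n) 2), mul_comm]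
    exact h1
  have h := tendsto_tsum_of_dominated_convergence (f := fun j n => ‖z j n - zl n‖ ^ 2)
    (g := fun _ => (0 : ℝ)) (𝓕 := atTop) (summable_jap_inv_sq.mul_left ((C + hnorm s zl) ^ 2))
    (fun n => ?_) (Eventually.of_forall fun j n => ?_)
  · rw [tsum_zero] at h
    refine h.congr fun j => ?_
    rw [hnorm_sq]
    exact tsum_congr fun n => (sobTerm_zero (fun n => z j n - zl n) n).symm
  · have h1 := ((hw.coeff hz hzl n).sub_const (zl n)).norm.pow 2
    simpa using h1
  · rw [Real.norm_of_nonneg (by positivity)]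
    exact hB j n

/-! ### Weak continuity of the flow -/

/-- for real `s ≥ 2` and `t ∈ ℝ`, if the initial data of solutions `u⁽ʲ⁾` of
dNLS converge weakly in `H^s` to the initial data of a solution `u`, then
`u⁽ʲ⁾(t) ⇀ u(t)` weakly in `H^s`. -/
theorem stmt10 (s : ℝ) (hs : 2 ≤ s) (t : ℝ)
    (z : ℕ → ℝ → ℤ → ℂ) (z₀ : ℕ → ℤ → ℂ)
    (u : ℝ → ℤ → ℂ) (u₀ : ℤ → ℂ)
    (hj : ∀ j, IsNLSSolution s (z j) (z₀ j))
    (hu : IsNLSSolution s u u₀)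
    (hw : WeakConv s z₀ u₀) :
    WeakConv s (fun j => z j t) (u t) := by
  have hz₀ : ∀ j, InH s (z₀ j) := fun j => (hj j).1 ▸ (hj j).mem 0
  have hu₀ : InH s u₀ := hu.1 ▸ hu.mem 0
  obtain ⟨C, hC⟩ := hw.bounded hz₀ hu₀
  set R := max C (hnorm s u₀)
  set M := japConst + (1 + (4 * Real.pi ^ 2 * R ^ 2 + (japConst + R ^ 2) ^ 4))
  have hMz : ∀ j t, ∑' n, ‖z j t n‖ ≤ M := fun j =>
    (hj j).tsum_norm_le hs ((hC j).trans (le_max_left _ _))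
  have hMu : ∀ t, ∑' n, ‖u t n‖ ≤ M := hu.tsum_norm_le hs (le_max_right _ _)
  refine weakConv_of_bounded (fun j => (hj j).mem t) (hu.mem t)
    (C := Real.sqrt (C ^ 2 * Real.exp (12 * (2 * 3 ^ s) * M ^ 2 * |t|))) (fun j => ?_) (fun n => ?_)
  · refine Real.le_sqrt_of_sq_le (((hj j).hnorm_sq_le hs (hMz j) t).trans ?_)
    gcongr
    · exact hnorm_nonneg _ _
    · exact hC j
  · have h1 := (hw.tendsto_hnorm_zero (by linarith) hz₀ hu₀).mul_const
      (Real.exp (12 * 2 * (M + M) ^ 2 * |t|))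
    rw [zero_mul] at h1
    have h2 := squeeze_zero (fun j => sq_nonneg (hnorm 0 (fun n => z j t n - u t n)))
      (fun j => (hj j).hnorm_zero_sub_sq_le hs hu (hMz j) hMu t) h1
    have h3 := h2.sqrt
    simp only [Real.sqrt_zero, Real.sqrt_sq (hnorm_nonneg _ _)] at h3
    rw [tendsto_iff_norm_sub_tendsto_zero]
    exact squeeze_zero (fun _ => norm_nonneg _) (fun j => norm_le_hnorm le_rfl
      ((((hj j).mem t).sub (hu.mem t)).mono (by linarith)) n) h3

end
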